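/- Under the system model with MRC, for every k ∈ {1,…,K}, E[v_{jk}(t)ᴴ h_{jjk}(t)] = E[‖v_{jk}(t)‖²] = N λ_{jjk}² · x̃_{jk}ᴴ D_{δ(t)} Ψ_j⁻¹ D_{δ(t)}ᴴ x̃_{jk}; in particular this expectation is real and nonnegative. -/

import Mathlib

open MeasureTheory ProbabilityTheory Matrix Complex
open scoped ProbabilityTheory Kronecker

/-- Deterministic phase-drift damping matrix
`D_{δ(t)} = diag(e^{−δ(t−1)/2}, …, e^{−δ(t−B)/2})`; the `b`-th diagonal entry
(`b : Fin B`, corresponding to pilot time `b+1`) is `e^{−δ(t−(b+1))/2}`. -/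
noncomputable def Dmat (δ : ℝ) (t B : ℕ) : Matrix (Fin B) (Fin B) ℂ :=
  Matrix.diagonal fun b => (Real.exp (-(δ / 2) * ((t : ℝ) - ((b : ℕ) + 1))) : ℂ)

/-- Deterministic pilot matrix `X_{ℓm}` built from the pilot sequence `xv`:
diagonal entries `|x(b)|²(1+κ²)` and off-diagonal entries `x(b₁)x(b₂)* e^{−δ|b₁−b₂|/2}`. -/
noncomputable def Xmat {B : ℕ} (κ δ : ℝ) (xv : Fin B → ℂ) : Matrix (Fin B) (Fin B) ℂ :=
  Matrix.of fun b₁ b₂ =>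
    if b₁ = b₂ then ((Complex.normSq (xv b₁) * (1 + κ ^ 2) : ℝ) : ℂ)
    else xv b₁ * star (xv b₂) * (Real.exp (-(δ / 2) * |((b₁ : ℕ) : ℝ) - ((b₂ : ℕ) : ℝ)|) : ℂ)

/-- Deterministic matrix `Ψ_j = Σ_ℓ Σ_m λ_{jℓm} X_{ℓm} + σ²ξ I_B`. -/
noncomputable def PsiMat {B L K : ℕ} (lam : Fin L → Fin K → ℝ) (σ2 ξ κ δ : ℝ)
    (x : Fin L → Fin K → Fin B → ℂ) : Matrix (Fin B) (Fin B) ℂ :=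
  (∑ l, ∑ m, ((lam l m : ℝ) : ℂ) • Xmat κ δ (x l m)) + ((σ2 * ξ : ℝ) : ℂ) • 1

/-- The uplink massive MIMO system model at base station `j`, on the probability space `Ω`,
with `N` antennas, pilot length `B`, `L` cells, `K` users per cell, channel attenuations
`lam l k = λ_{jlk}`, noise variance `σ2 = σ²`, noise amplification `ξ`, distortion parameter
`κ`, phase-drift variance `δ`, and deterministic pilot sequences `x l k : Fin B → ℂ`
(pilot time `b+1` for `b : Fin B`).  All underlying real random sources are mutually
independent: channel real/imaginary parts `hRe, hIm ~ N(0, λ_{jlk}/2)` (so the channel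
coefficients are `CN(0, λ_{jlk})`), phase-drift increments `dphi n u ~ N(0, δ)` (`u ≥ 1`),
distortion real/imaginary parts `zRe, zIm ~ N(0, 1/2)` (so `z ~ CN(0,1)`), and receiver-noise
real/imaginary parts `etaRe, etaIm ~ N(0, σ²ξ/2)` (so `η ~ CN(0, σ²ξ)`). -/
structure MIMOModel (Ω : Type*) [MeasureSpace Ω] (N B L K : ℕ)
    (lam : Fin L → Fin K → ℝ) (σ2 ξ κ δ : ℝ) (x : Fin L → Fin K → Fin B → ℂ) where
  hRe : Fin L → Fin K → Fin N → Ω → ℝ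
  hIm : Fin L → Fin K → Fin N → Ω → ℝ
  dphi : Fin N → ℕ → Ω → ℝ
  zRe : Fin N → ℕ → Ω → ℝ
  zIm : Fin N → ℕ → Ω → ℝ
  etaRe : Fin N → ℕ → Ω → ℝ
  etaIm : Fin N → ℕ → Ω → ℝ
  meas_hRe : ∀ l k n, Measurable (hRe l k n)
  meas_hIm : ∀ l k n, Measurable (hIm l k n)
  meas_dphi : ∀ n u, Measurable (dphi n u)
  meas_zRe : ∀ n s, Measurable (zRe n s)
  meas_zIm : ∀ n s, Measurable (zIm n s)
  meas_etaRe : ∀ n s, Measurable (etaRe n s)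
  meas_etaIm : ∀ n s, Measurable (etaIm n s)
  law_hRe : ∀ l k n, Measure.map (hRe l k n) ℙ = gaussianReal 0 (Real.toNNReal (lam l k / 2))
  law_hIm : ∀ l k n, Measure.map (hIm l k n) ℙ = gaussianReal 0 (Real.toNNReal (lam l k / 2))
  law_dphi : ∀ n u, Measure.map (dphi n u) ℙ = gaussianReal 0 (Real.toNNReal δ)
  law_zRe : ∀ n s, Measure.map (zRe n s) ℙ = gaussianReal 0 (Real.toNNReal (1 / 2))
  law_zIm : ∀ n s, Measure.map (zIm n s) ℙ = gaussianReal 0 (Real.toNNReal (1 / 2))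
  law_etaRe : ∀ n s, Measure.map (etaRe n s) ℙ = gaussianReal 0 (Real.toNNReal (σ2 * ξ / 2))
  law_etaIm : ∀ n s, Measure.map (etaIm n s) ℙ = gaussianReal 0 (Real.toNNReal (σ2 * ξ / 2))
  indep : iIndepFun (m := fun _ => (inferInstance : MeasurableSpace ℝ))
    (fun i : (Fin L × Fin K × Fin N × Bool) ⊕ (Fin N × ℕ) ⊕ (Fin N × ℕ × Bool) ⊕
        (Fin N × ℕ × Bool) =>
      match i with
      | Sum.inl (l, k, n, false) => hRe l k n
      | Sum.inl (l, k, n, true) => hIm l k n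
      | Sum.inr (Sum.inl (n, u)) => dphi n u
      | Sum.inr (Sum.inr (Sum.inl (n, s, false))) => zRe n s
      | Sum.inr (Sum.inr (Sum.inl (n, s, true))) => zIm n s
      | Sum.inr (Sum.inr (Sum.inr (n, s, false))) => etaRe n s
      | Sum.inr (Sum.inr (Sum.inr (n, s, true))) => etaIm n s) (ℙ : Measure Ω)

namespace MIMOModel

variable {Ω : Type*} [MeasureSpace Ω] {N B L K : ℕ} {lam : Fin L → Fin K → ℝ}
  {σ2 ξ κ δ : ℝ} {x : Fin L → Fin K → Fin B → ℂ}

variable (M : MIMOModel Ω N B L K lam σ2 ξ κ δ x)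

/-- Accumulated phase drift `φ_{jn}(s) = Σ_{u=1}^{s} Δ_{jn}(u)`. -/
noncomputable def phase (n : Fin N) (s : ℕ) (ω : Ω) : ℝ :=
  ∑ u ∈ Finset.Icc 1 s, M.dphi n u ω

/-- Channel coefficient `h_{jlk}^{(n)} ~ CN(0, λ_{jlk})`. -/
noncomputable def ch (l : Fin L) (k : Fin K) (n : Fin N) (ω : Ω) : ℂ :=
  Complex.mk (M.hRe l k n ω) (M.hIm l k n ω)

/-- Distortion variable `z_{jn}(s) ~ CN(0,1)`. -/
noncomputable def z (n : Fin N) (s : ℕ) (ω : Ω) : ℂ :=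
  Complex.mk (M.zRe n s ω) (M.zIm n s ω)

/-- Receiver noise `η_j^{(n)}(s) ~ CN(0, σ²ξ)`. -/
noncomputable def eta (n : Fin N) (s : ℕ) (ω : Ω) : ℂ :=
  Complex.mk (M.etaRe n s ω) (M.etaIm n s ω)

/-- Received pilot signal at antenna `n`, pilot time `b+1` (for `b : Fin B`):
`y_j^{(n)}(b) = e^{iφ_{jn}(b)} Σ_l Σ_m h_{jlm}^{(n)} x_{lm}(b)
  + κ (Σ_l Σ_m |x_{lm}(b)|² |h_{jlm}^{(n)}|²)^{1/2} z_{jn}(b) + η_j^{(n)}(b)`. -/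
noncomputable def y (n : Fin N) (b : Fin B) (ω : Ω) : ℂ :=
  Complex.exp (Complex.I * ((M.phase n ((b : ℕ) + 1) ω : ℝ) : ℂ))
      * ∑ l, ∑ m, M.ch l m n ω * x l m b
    + (κ : ℂ) * ((Real.sqrt (∑ l, ∑ m, Complex.normSq (x l m b)
        * Complex.normSq (M.ch l m n ω)) : ℝ) : ℂ) * M.z n ((b : ℕ) + 1) ω
    + M.eta n ((b : ℕ) + 1) ω

/-- Effective channel at time `t`: `h_{jlk}(t)` has `n`-th entry `e^{iφ_{jn}(t)} h_{jlk}^{(n)}`. -/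
noncomputable def hEff (l : Fin L) (k : Fin K) (t : ℕ) (n : Fin N) (ω : Ω) : ℂ :=
  Complex.exp (Complex.I * ((M.phase n t ω : ℝ) : ℂ)) * M.ch l k n ω

/-- LMMSE channel estimate `ĥ_{jlk}(t) = λ_{jlk} Σ_b c_b y_j(b)` with
`(c_1, …, c_B) = x̃_{lk}ᴴ D_{δ(t)} Ψ_j⁻¹`. -/
noncomputable def hHat (l : Fin L) (k : Fin K) (t : ℕ) (n : Fin N) (ω : Ω) : ℂ :=
  ((lam l k : ℝ) : ℂ) * ∑ b,
    Matrix.vecMul (star (x l k)) (Dmat δ t B * (PsiMat lam σ2 ξ κ δ x)⁻¹) b * M.y n b ω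

/-- Data-phase distortion noise `υ_j(t)` with `n`-th entry
`κ (Σ_l Σ_m p_{lm} |h_{jlm}^{(n)}|²)^{1/2} z_{jn}(t)`. -/
noncomputable def ups (p : Fin L → Fin K → ℝ) (t : ℕ) (n : Fin N) (ω : Ω) : ℂ :=
  (κ : ℂ) * ((Real.sqrt (∑ l, ∑ m, p l m * Complex.normSq (M.ch l m n ω)) : ℝ) : ℂ)
    * M.z n t ω

/-- The uplink SINR of user `k` in cell `j` at time `t` with the MRC filter
`v_{jk}(t) = ĥ_{jjk}(t)`. -/
noncomputable def SINR (p : Fin L → Fin K → ℝ) (j : Fin L) (k : Fin K) (t : ℕ) : ℝ :=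
  p j k * Complex.normSq (∫ ω, ∑ n, star (M.hHat j k t n ω) * M.hEff j k t n ω) /
    ((∑ l, ∑ m, p l m * ∫ ω, Complex.normSq (∑ n, star (M.hHat j k t n ω) * M.hEff l m t n ω))
      - p j k * Complex.normSq (∫ ω, ∑ n, star (M.hHat j k t n ω) * M.hEff j k t n ω)
      + (∫ ω, Complex.normSq (∑ n, star (M.hHat j k t n ω) * M.ups p t n ω))
      + σ2 * ξ * ∫ ω, ∑ n, Complex.normSq (M.hHat j k t n ω))

end MIMOModel

/- For a target `h` and observations `y` with `C = E[y yᴴ]` and `r = E[h yᴴ]`, the estimate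
`ĥ = r C⁻¹ y` satisfies `E[h ĥ*] = r C⁻¹ rᴴ = E[|ĥ|²]`. At each antenna, the received pilots have
`C = Ψ_j` and `r = λ_{jjk} x̃_{jk}ᴴ D_{δ(t)}`: signal, distortion and noise are uncorrelated, and
`E[e^{i(φ(a) - φ(b))}] = e^{-δ|a - b|/2}` because `φ(a) - φ(b)` is a sum of `|a - b|` independent
`N(0, δ)` increments up to sign. Hence `ĥ_{jjk}(t)` is this estimate, and the `N` antennas
contribute equally to both expectations. -/

/- Holds for singular `A` too, where `A⁻¹ = 0` by convention. -/
theorem nonsing_inv_mul_mul_nonsing_inv {n R : Type*} [Fintype n] [DecidableEq n] [CommRing R]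
    (A : Matrix n n R) : A⁻¹ * A * A⁻¹ = A⁻¹ := by
  by_cases h : IsUnit A.det
  · rw [Matrix.nonsing_inv_mul _ h, one_mul]
  · rw [Matrix.nonsing_inv_apply_not_isUnit _ h, mul_zero]

theorem measurable_complexMk {α : Type*} {_ : MeasurableSpace α} {f g : α → ℝ} (hf : Measurable f)
    (hg : Measurable g) : Measurable fun a => Complex.mk (f a) (g a) :=
  Complex.measurableEquivRealProd.symm.measurable.comp (hf.prodMk hg)

section CrossCorr

variable {Ω : Type*} {mΩ : MeasurableSpace Ω} {μ : Measure Ω} {ι : Type*}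

/-- The cross-correlation `E[f g*]`, a sesquilinear form on square-integrable complex random
variables (linear in the first argument; means are not subtracted). -/
noncomputable def crossCorr (f g : Ω → ℂ) (μ : Measure Ω) : ℂ := ∫ ω, f ω * star (g ω) ∂μ

theorem star_crossCorr (f g : Ω → ℂ) : star (crossCorr f g μ) = crossCorr g f μ := by
  simp only [crossCorr, Complex.star_def, ← integral_conj, map_mul, Complex.conj_conj, mul_comm]

theorem crossCorr_self (f : Ω → ℂ) :
    crossCorr f f μ = ((∫ ω, Complex.normSq (f ω) ∂μ : ℝ) : ℂ) := by
  simp only [crossCorr, Complex.star_def, Complex.mul_conj, integral_complex_ofReal]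

variable {f g h : Ω → ℂ}

theorem integrable_mul_star_of_memLp_two (hf : MemLp f 2 μ) (hg : MemLp g 2 μ) :
    Integrable (fun ω => f ω * star (g ω)) μ :=
  hf.integrable_mul (q := 2) hg.star

theorem integrable_normSq_of_memLp_two (hf : MemLp f 2 μ) :
    Integrable (fun ω => normSq (f ω)) μ := by
  simpa only [normSq_eq_norm_sq] using hf.norm.integrable_sq

theorem crossCorr_add_left (hf : MemLp f 2 μ) (hg : MemLp g 2 μ) (hh : MemLp h 2 μ) :
    crossCorr (fun ω => f ω + g ω) h μ = crossCorr f h μ + crossCorr g h μ := by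
  simp only [crossCorr, add_mul]
  exact integral_add (integrable_mul_star_of_memLp_two hf hh)
    (integrable_mul_star_of_memLp_two hg hh)

theorem crossCorr_add_right (hf : MemLp f 2 μ) (hg : MemLp g 2 μ) (hh : MemLp h 2 μ) :
    crossCorr f (fun ω => g ω + h ω) μ = crossCorr f g μ + crossCorr f h μ := by
  rw [← star_crossCorr, crossCorr_add_left hg hh hf, star_add, star_crossCorr, star_crossCorr]

theorem crossCorr_add_add_of_crossCorr_eq_zero {f' g' : Ω → ℂ} (hf : MemLp f 2 μ)
    (hg : MemLp g 2 μ) (hf' : MemLp f' 2 μ) (hg' : MemLp g' 2 μ)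
    (hfg' : crossCorr f g' μ = 0) (hf'g : crossCorr f' g μ = 0) :
    crossCorr (fun ω => f ω + g ω) (fun ω => f' ω + g' ω) μ =
      crossCorr f f' μ + crossCorr g g' μ := by
  have hgf' : crossCorr g f' μ = 0 := by rw [← star_crossCorr, hf'g, star_zero]
  have hsum : MemLp (fun ω => f' ω + g' ω) 2 μ := hf'.add hg'
  rw [crossCorr_add_left hf hg hsum, crossCorr_add_right hf hf' hg',
    crossCorr_add_right hg hf' hg', hfg', hgf', add_zero, zero_add]

theorem crossCorr_sum_mul_left [Fintype ι] (a : ι → ℂ) {f : ι → Ω → ℂ}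
    (hf : ∀ i, MemLp (f i) 2 μ) (hg : MemLp g 2 μ) :
    crossCorr (fun ω => ∑ i, a i * f i ω) g μ = ∑ i, a i * crossCorr (f i) g μ := by
  simp only [crossCorr, Finset.sum_mul, mul_assoc]
  rw [integral_finsetSum _ fun i _ =>
    (integrable_mul_star_of_memLp_two (hf i) hg).const_mul (a i)]
  simp only [integral_const_mul]

theorem crossCorr_sum_mul_right [Fintype ι] (a : ι → ℂ) (hf : MemLp f 2 μ) {g : ι → Ω → ℂ}
    (hg : ∀ i, MemLp (g i) 2 μ) :
    crossCorr f (fun ω => ∑ i, a i * g i ω) μ = ∑ i, crossCorr f (g i) μ * star (a i) := by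
  rw [← star_crossCorr, crossCorr_sum_mul_left a hg hf, star_sum]
  simp only [star_mul, star_crossCorr]

theorem crossCorr_of_indepFun (hfg : IndepFun f g μ) (hf : AEStronglyMeasurable f μ)
    (hg : AEStronglyMeasurable g μ) :
    crossCorr f g μ = (∫ ω, f ω ∂μ) * star (∫ ω, g ω ∂μ) := by
  have hfg' : IndepFun f (fun ω => star (g ω)) μ :=
    hfg.comp measurable_id continuous_star.measurable
  rw [crossCorr, hfg'.integral_fun_mul_eq_mul_integral hf hg.star]
  congr 1
  exact integral_conj

theorem crossCorr_mul_mul_of_indepFun {a b : Ω → ℂ}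
    (hindep : IndepFun (fun ω => (a ω, b ω)) (fun ω => (f ω, g ω)) μ)
    (ha : AEStronglyMeasurable a μ) (hb : AEStronglyMeasurable b μ)
    (hf : AEStronglyMeasurable f μ) (hg : AEStronglyMeasurable g μ) :
    crossCorr (fun ω => a ω * f ω) (fun ω => b ω * g ω) μ =
      crossCorr a b μ * crossCorr f g μ := by
  have hmul : Measurable fun p : ℂ × ℂ => p.1 * star p.2 := by fun_prop
  have hprod : IndepFun (fun ω => a ω * star (b ω)) (fun ω => f ω * star (g ω)) μ :=
    hindep.comp hmul hmul
  rw [crossCorr, crossCorr, crossCorr,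
    ← hprod.integral_fun_mul_eq_mul_integral (ha.mul hb.star) (hf.mul hg.star)]
  simp only [star_mul']
  congr! 2
  ring

theorem crossCorr_mul_right_of_indepFun
    (hindep : IndepFun (fun ω => (f ω, g ω)) h μ) (hf : AEStronglyMeasurable f μ)
    (hg : AEStronglyMeasurable g μ) (hh : AEStronglyMeasurable h μ) :
    crossCorr f (fun ω => g ω * h ω) μ = crossCorr f g μ * star (∫ ω, h ω ∂μ) := by
  have hmul : Measurable fun p : ℂ × ℂ => p.1 * star p.2 := by fun_prop
  have hprod : IndepFun (fun ω => f ω * star (g ω)) (fun ω => star (h ω)) μ :=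
    hindep.comp hmul continuous_star.measurable
  have hmean : star (∫ ω, h ω ∂μ) = ∫ ω, star (h ω) ∂μ := integral_conj.symm
  rw [crossCorr, crossCorr, hmean,
    ← hprod.integral_fun_mul_eq_mul_integral (hf.mul hg.star) hh.star]
  simp only [star_mul', mul_assoc]

theorem memLp_two_mul_of_indepFun (hfg : IndepFun f g μ) (hf : MemLp f 2 μ) (hg : MemLp g 2 μ) :
    MemLp (fun ω => f ω * g ω) 2 μ := by
  have hsq : Measurable fun z : ℂ => ‖z‖ ^ 2 := by fun_prop
  refine (memLp_two_iff_integrable_sq_norm (hf.1.mul hg.1)).2 ?_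
  simpa only [Pi.mul_apply, norm_mul, mul_pow] using!
    (hfg.comp hsq hsq).integrable_mul hf.norm.integrable_sq hg.norm.integrable_sq

theorem memLp_mul_of_norm_eq_one (hu : AEStronglyMeasurable g μ) (hg : ∀ ω, ‖g ω‖ = 1) {p}
    (hf : MemLp f p μ) : MemLp (fun ω => g ω * f ω) p μ :=
  hf.of_le (hu.mul hf.1) <| .of_forall fun ω => by rw [norm_mul, hg, one_mul]

theorem ofReal_integral_sum_normSq [Fintype ι] {f : ι → Ω → ℂ} (hf : ∀ i, MemLp (f i) 2 μ) :
    ((∫ ω, ∑ i, normSq (f i ω) ∂μ : ℝ) : ℂ) = ∑ i, crossCorr (f i) (f i) μ := by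
  rw [integral_finsetSum _ fun i _ => integrable_normSq_of_memLp_two (hf i), ofReal_sum]
  simp only [crossCorr_self]

theorem integral_sum_star_mul [Fintype ι] {f g : ι → Ω → ℂ} (hf : ∀ i, MemLp (f i) 2 μ)
    (hg : ∀ i, MemLp (g i) 2 μ) :
    ∫ ω, ∑ i, star (f i ω) * g i ω ∂μ = ∑ i, crossCorr (g i) (f i) μ := by
  simp only [mul_comm (star _)]
  exact integral_finsetSum _ fun i _ => integrable_mul_star_of_memLp_two (hg i) (hf i)

end CrossCorr

section Lmmse

variable {Ω ι : Type*} {mΩ : MeasurableSpace Ω} {μ : Measure Ω} {h : Ω → ℂ} {y : ι → Ω → ℂ}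

/-- The correlation matrix `E[y yᴴ]` of an observation vector. -/
noncomputable def corrMatrix (y : ι → Ω → ℂ) (μ : Measure Ω) : Matrix ι ι ℂ :=
  Matrix.of fun b c => crossCorr (y b) (y c) μ

/-- The row vector `E[h yᴴ]` correlating a target `h` with an observation vector. -/
noncomputable def crossCorrVec (h : Ω → ℂ) (y : ι → Ω → ℂ) (μ : Measure Ω) : ι → ℂ :=
  fun b => crossCorr h (y b) μ

theorem isHermitian_corrMatrix (y : ι → Ω → ℂ) : (corrMatrix y μ).IsHermitian :=
  Matrix.IsHermitian.ext fun b c => star_crossCorr (y c) (y b)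

variable [Fintype ι] [DecidableEq ι]

/-- The weights `r C⁻¹`, with `r = E[h yᴴ]` and `C = E[y yᴴ]`, of the linear estimator of `h` from
`y` with minimal mean square error; they are zero for singular `C`, by the convention `C⁻¹ = 0`. -/
noncomputable def lmmseWeights (h : Ω → ℂ) (y : ι → Ω → ℂ) (μ : Measure Ω) : ι → ℂ :=
  crossCorrVec h y μ ᵥ* (corrMatrix y μ)⁻¹

/-- The linear minimum mean square error estimate of `h` from the observations `y`. -/
noncomputable def lmmse (h : Ω → ℂ) (y : ι → Ω → ℂ) (μ : Measure Ω) (ω : Ω) : ℂ :=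
  ∑ b, lmmseWeights h y μ b * y b ω

theorem star_lmmseWeights :
    star (lmmseWeights h y μ) = (corrMatrix y μ)⁻¹ *ᵥ star (crossCorrVec h y μ) := by
  rw [lmmseWeights, star_vecMul, (isHermitian_corrMatrix y).inv.eq]

theorem memLp_lmmse (hy : ∀ b, MemLp (y b) 2 μ) : MemLp (lmmse h y μ) 2 μ :=
  memLp_finsetSum _ fun b _ => (hy b).const_mul _

theorem crossCorr_lmmse (hh : MemLp h 2 μ) (hy : ∀ b, MemLp (y b) 2 μ) :
    crossCorr h (lmmse h y μ) μ =
      crossCorrVec h y μ ⬝ᵥ (corrMatrix y μ)⁻¹ *ᵥ star (crossCorrVec h y μ) := by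
  rw [← star_lmmseWeights]
  exact crossCorr_sum_mul_right _ hh hy

theorem crossCorr_lmmse_self (hy : ∀ b, MemLp (y b) 2 μ) :
    crossCorr (lmmse h y μ) (lmmse h y μ) μ =
      crossCorrVec h y μ ⬝ᵥ (corrMatrix y μ)⁻¹ *ᵥ star (crossCorrVec h y μ) := by
  have hquad : crossCorr (lmmse h y μ) (lmmse h y μ) μ =
      lmmseWeights h y μ ⬝ᵥ corrMatrix y μ *ᵥ star (lmmseWeights h y μ) := by
    simp_rw [dotProduct, mulVec, dotProduct]
    refine (crossCorr_sum_mul_left _ hy (memLp_lmmse hy)).trans ?_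
    congr! 2 with b
    exact crossCorr_sum_mul_right _ (hy b) hy
  rw [hquad, star_lmmseWeights, lmmseWeights, ← dotProduct_mulVec, mulVec_mulVec, mulVec_mulVec,
    nonsing_inv_mul_mul_nonsing_inv]

end Lmmse

section Gaussian

variable {Ω : Type*} {mΩ : MeasurableSpace Ω} {μ : Measure Ω}

theorem integral_cexp_I_mul_sum_of_hasLaw_gaussianReal {ι : Type*} [Fintype ι]
    {X : ι → Ω → ℝ} {v : NNReal}
    (hindep : iIndepFun X μ) (hX : ∀ i, HasLaw (X i) (gaussianReal 0 v) μ) :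
    ∫ ω, cexp (I * ((∑ i, X i ω : ℝ) : ℂ)) ∂μ = (Real.exp (-(v / 2) * Fintype.card ι) : ℂ) := by
  have hchar (i : ι) : ∫ ω, cexp (I * X i ω) ∂μ = (Real.exp (-(v / 2)) : ℂ) := by
    have h := charFun_gaussianReal (μ := 0) (v := v) 1
    rw [← (hX i).map_eq, charFun_apply_real, integral_map (hX i).aemeasurable (by fun_prop)] at h
    simpa [mul_comm] using h
  calc ∫ ω, cexp (I * ((∑ i, X i ω : ℝ) : ℂ)) ∂μ = ∫ ω, ∏ i, cexp (I * X i ω) ∂μ := by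
        simp only [ofReal_sum, Finset.mul_sum, Complex.exp_sum]
    _ = ∏ i, ∫ ω, cexp (I * X i ω) ∂μ :=
        hindep.integral_fun_prod_comp (f := fun _ (u : ℝ) => cexp (I * u))
          (fun i => (hX i).aemeasurable) (fun i => by fun_prop)
    _ = (Real.exp (-(v / 2) * Fintype.card ι) : ℂ) := by
        simp only [hchar, Finset.prod_const, Finset.card_univ]
        rw [mul_comm, Real.exp_nat_mul, ofReal_pow]

theorem integral_sq_of_hasLaw_gaussianReal {X : Ω → ℝ} {v : NNReal}
    (hX : HasLaw X (gaussianReal 0 v) μ) : ∫ ω, X ω ^ 2 ∂μ = v := by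
  rw [← variance_id_gaussianReal (μ := 0), ← hX.variance_eq, variance_of_integral_eq_zero]
  · exact hX.aemeasurable
  · rw [hX.integral_eq, integral_id_gaussianReal]

/-- The real and imaginary parts of `Z` are both `N(0, v/2)`, as for `CN(0, v)`, but without
independence of the two parts: the moments `E[Z]` and `E[|Z|²]` do not depend on it. -/
structure HasComplexGaussianParts (Z : Ω → ℂ) (v : ℝ) (μ : Measure Ω) : Prop where
  re : HasLaw (fun ω => (Z ω).re) (gaussianReal 0 (v / 2).toNNReal) μ
  im : HasLaw (fun ω => (Z ω).im) (gaussianReal 0 (v / 2).toNNReal) μ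

namespace HasComplexGaussianParts

variable {Z : Ω → ℂ} {v : ℝ}

theorem memLp_two (hZ : HasComplexGaussianParts Z v μ) : MemLp Z 2 μ :=
  memLp_re_im_iff.1
    ⟨hZ.re.hasGaussianLaw.memLp_two, hZ.im.hasGaussianLaw.memLp_two⟩

theorem integral_eq_zero (hZ : HasComplexGaussianParts Z v μ) : ∫ ω, Z ω ∂μ = 0 := by
  have := hZ.re.isProbabilityMeasure
  rw [← integral_re_add_im (hZ.memLp_two.integrable one_le_two)]
  simp [hZ.re.integral_eq, hZ.im.integral_eq]

theorem crossCorr_eq_zero_of_indepFun (hZ : HasComplexGaussianParts Z v μ) {f : Ω → ℂ}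
    (hfZ : IndepFun f Z μ) (hf : AEStronglyMeasurable f μ) : crossCorr f Z μ = 0 := by
  rw [crossCorr_of_indepFun hfZ hf hZ.memLp_two.1, hZ.integral_eq_zero, star_zero, mul_zero]

theorem crossCorr_self (hZ : HasComplexGaussianParts Z v μ) (hv : 0 ≤ v) :
    crossCorr Z Z μ = v := by
  rw [_root_.crossCorr_self]
  simp only [normSq_apply, ← pow_two]
  rw [integral_add hZ.re.hasGaussianLaw.memLp_two.integrable_sq
    hZ.im.hasGaussianLaw.memLp_two.integrable_sq, integral_sq_of_hasLaw_gaussianReal hZ.re,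
    integral_sq_of_hasLaw_gaussianReal hZ.im, Real.coe_toNNReal _ (by linarith), add_halves]

end HasComplexGaussianParts

end Gaussian

section SigmaGenerated

variable {Ω ι : Type*} {mΩ : MeasurableSpace Ω} {μ : Measure Ω} {β : ι → Type*}
  [mβ : ∀ i, MeasurableSpace (β i)] {X : ∀ i, Ω → β i} {S T : Set ι}

/-- The σ-algebra generated by the variables `X i` with `i ∈ S`. -/
@[reducible] def sigmaGenerated (X : ∀ i, Ω → β i) (S : Set ι) : MeasurableSpace Ω :=
  ⨆ i ∈ S, (mβ i).comap (X i)

theorem sigmaGenerated_le (hX : ∀ i, Measurable (X i)) (S : Set ι) : sigmaGenerated X S ≤ mΩ :=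
  iSup₂_le fun i _ => (hX i).comap_le

theorem measurable_sigmaGenerated {i : ι} (hi : i ∈ S) : Measurable[sigmaGenerated X S] (X i) :=
  measurable_iff_comap_le.2 (le_iSup₂_of_le i hi le_rfl)

theorem measurable_of_sigmaGenerated {E : Type*} [MeasurableSpace E] {f : Ω → E}
    (hX : ∀ i, Measurable (X i)) (hf : Measurable[sigmaGenerated X S] f) : Measurable f :=
  hf.mono (sigmaGenerated_le hX S) le_rfl

theorem indepFun_of_measurable_sigmaGenerated (hindep : iIndepFun X μ)
    (hX : ∀ i, Measurable (X i)) (hST : Disjoint S T) {E F : Type*} [MeasurableSpace E]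
    [MeasurableSpace F] {f : Ω → E} {g : Ω → F} (hf : Measurable[sigmaGenerated X S] f)
    (hg : Measurable[sigmaGenerated X T] g) : IndepFun f g μ := by
  rw [IndepFun_iff_Indep]
  have h := indep_iSup_of_disjoint (fun i => (hX i).comap_le)
    ((iIndepFun_iff_iIndep _ _ _).1 hindep) hST
  exact indep_of_indep_of_le_left (indep_of_indep_of_le_right h hg.comap_le) hf.comap_le

end SigmaGenerated

namespace MIMOModel

/-- Index of the real Gaussian sources of the model; `c : Bool` selects the real (`false`) or
imaginary (`true`) part of a complex source. -/
inductive Source (N L K : ℕ)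
  | channel (l : Fin L) (k : Fin K) (n : Fin N) (c : Bool)
  | phase (n : Fin N) (u : ℕ)
  | distortion (n : Fin N) (s : ℕ) (c : Bool)
  | noise (n : Fin N) (s : ℕ) (c : Bool)

namespace Source

variable {N L K : ℕ}

/-- The position of a source in the index type of `MIMOModel.indep`. -/
def toIndex : Source N L K →
    (Fin L × Fin K × Fin N × Bool) ⊕ (Fin N × ℕ) ⊕ (Fin N × ℕ × Bool) ⊕ (Fin N × ℕ × Bool)
  | channel l k n c => .inl (l, k, n, c)
  | phase n u => .inr (.inl (n, u))
  | distortion n s c => .inr (.inr (.inl (n, s, c)))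
  | noise n s c => .inr (.inr (.inr (n, s, c)))

theorem toIndex_injective : Function.Injective (toIndex (N := N) (L := L) (K := K)) := by
  rintro (_ | _ | _ | _) (_ | _ | _ | _) h <;> simp_all [toIndex]

/-- The phase increments of all antennas. -/
def phaseSources (N L K : ℕ) : Set (Source N L K) := {i | ∃ n u, i = phase n u}

/-- The real and imaginary parts of the distortion variables of all antennas. -/
def distortionSources (N L K : ℕ) : Set (Source N L K) := {i | ∃ n s c, i = distortion n s c}

/-- The real and imaginary parts of the receiver noise of all antennas. -/
def noiseSources (N L K : ℕ) : Set (Source N L K) := {i | ∃ n s c, i = noise n s c}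

end Source

variable {Ω : Type*} [MeasureSpace Ω] {N B L K : ℕ} {lam : Fin L → Fin K → ℝ}
  {σ2 ξ κ δ : ℝ} {x : Fin L → Fin K → Fin B → ℂ} (M : MIMOModel Ω N B L K lam σ2 ξ κ δ x)

section Independence

/-- The random variable with a given source index. -/
def source : Source N L K → Ω → ℝ
  | .channel l k n false => M.hRe l k n
  | .channel l k n true => M.hIm l k n
  | .phase n u => M.dphi n u
  | .distortion n s false => M.zRe n s
  | .distortion n s true => M.zIm n s
  | .noise n s false => M.etaRe n s
  | .noise n s true => M.etaIm n s

theorem measurable_source : ∀ i, Measurable (M.source i)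
  | .channel l k n false => M.meas_hRe l k n
  | .channel l k n true => M.meas_hIm l k n
  | .phase n u => M.meas_dphi n u
  | .distortion n s false => M.meas_zRe n s
  | .distortion n s true => M.meas_zIm n s
  | .noise n s false => M.meas_etaRe n s
  | .noise n s true => M.meas_etaIm n s

theorem iIndepFun_source : iIndepFun M.source ℙ := by
  convert M.indep.precomp Source.toIndex_injective using 1
  funext i
  rcases i with ⟨_, _, _, _ | _⟩ | _ | ⟨_, _, _ | _⟩ | ⟨_, _, _ | _⟩ <;> rfl

theorem indepFun_of_measurable_compl {S : Set (Source N L K)} {E F : Type*} [MeasurableSpace E]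
    [MeasurableSpace F] {f : Ω → E} {g : Ω → F} (hf : Measurable[sigmaGenerated M.source S] f)
    (hg : Measurable[sigmaGenerated M.source Sᶜ] g) : IndepFun f g ℙ :=
  indepFun_of_measurable_sigmaGenerated M.iIndepFun_source M.measurable_source
    disjoint_compl_right hf hg

end Independence

section Measurability

/-- The phase rotation `e^{iφ_{jn}(s)}`. -/
noncomputable def phasor (n : Fin N) (s : ℕ) (ω : Ω) : ℂ := cexp (I * (M.phase n s ω : ℂ))

/-- The superposition `Σ_l Σ_m h_{jlm}^{(n)} x_{lm}(b)` of the pilots at antenna `n`. -/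
noncomputable def pilotSum (n : Fin N) (b : Fin B) (ω : Ω) : ℂ := ∑ l, ∑ m, M.ch l m n ω * x l m b

/-- The amplitude `κ (Σ_l Σ_m |x_{lm}(b)|² |h_{jlm}^{(n)}|²)^{1/2}` of the distortion. -/
noncomputable def distortionScale (n : Fin N) (b : Fin B) (ω : Ω) : ℂ :=
  κ * (√(∑ l, ∑ m, normSq (x l m b) * normSq (M.ch l m n ω)) : ℝ)

/-- The phase-rotated pilot term of `y`. -/
noncomputable def signal (n : Fin N) (b : Fin B) (ω : Ω) : ℂ :=
  M.phasor n (b + 1) ω * M.pilotSum n b ω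

/-- The distortion term of `y`. -/
noncomputable def distortion (n : Fin N) (b : Fin B) (ω : Ω) : ℂ :=
  M.distortionScale n b ω * M.z n (b + 1) ω

theorem y_eq (n : Fin N) (b : Fin B) :
    M.y n b = fun ω => M.signal n b ω + M.distortion n b ω + M.eta n (b + 1) ω := rfl

variable {S : Set (Source N L K)}

theorem measurable_ch {l : Fin L} {k : Fin K} {n : Fin N} (h : ∀ c, .channel l k n c ∈ S) :
    Measurable[sigmaGenerated M.source S] (M.ch l k n) :=
  measurable_complexMk (measurable_sigmaGenerated (X := M.source) (h false))
    (measurable_sigmaGenerated (X := M.source) (h true))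

theorem measurable_z {n : Fin N} {s : ℕ} (h : ∀ c, .distortion n s c ∈ S) :
    Measurable[sigmaGenerated M.source S] (M.z n s) :=
  measurable_complexMk (measurable_sigmaGenerated (X := M.source) (h false))
    (measurable_sigmaGenerated (X := M.source) (h true))

theorem measurable_eta {n : Fin N} {s : ℕ} (h : ∀ c, .noise n s c ∈ S) :
    Measurable[sigmaGenerated M.source S] (M.eta n s) :=
  measurable_complexMk (measurable_sigmaGenerated (X := M.source) (h false))
    (measurable_sigmaGenerated (X := M.source) (h true))

theorem measurable_phasor {n : Fin N} (h : ∀ u, .phase n u ∈ S) (s : ℕ) :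
    Measurable[sigmaGenerated M.source S] (M.phasor n s) := by
  have hinc (u : ℕ) : Measurable[sigmaGenerated M.source S] (M.dphi n u) :=
    measurable_sigmaGenerated (X := M.source) (h u)
  unfold MIMOModel.phasor MIMOModel.phase
  fun_prop

theorem measurable_pilotSum {n : Fin N} (h : ∀ l k c, .channel l k n c ∈ S) (b : Fin B) :
    Measurable[sigmaGenerated M.source S] (M.pilotSum n b) := by
  have hch (l : Fin L) (k : Fin K) := M.measurable_ch (h l k)
  unfold MIMOModel.pilotSum
  fun_prop

theorem measurable_distortionScale {n : Fin N} (h : ∀ l k c, .channel l k n c ∈ S) (b : Fin B) :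
    Measurable[sigmaGenerated M.source S] (M.distortionScale n b) := by
  have hch (l : Fin L) (k : Fin K) := M.measurable_ch (h l k)
  unfold MIMOModel.distortionScale
  fun_prop

theorem measurable_signal {n : Fin N} (hphase : ∀ u, .phase n u ∈ S)
    (hch : ∀ l k c, .channel l k n c ∈ S) (b : Fin B) :
    Measurable[sigmaGenerated M.source S] (M.signal n b) :=
  (M.measurable_phasor hphase _).mul (M.measurable_pilotSum hch b)

theorem measurable_distortion {n : Fin N} {b : Fin B} (hch : ∀ l k c, .channel l k n c ∈ S)
    (hz : ∀ c, .distortion n (b + 1) c ∈ S) :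
    Measurable[sigmaGenerated M.source S] (M.distortion n b) :=
  (M.measurable_distortionScale hch b).mul (M.measurable_z hz)

theorem measurable_hEff {n : Fin N} {l : Fin L} {k : Fin K} (hphase : ∀ u, .phase n u ∈ S)
    (hch : ∀ c, .channel l k n c ∈ S) (t : ℕ) :
    Measurable[sigmaGenerated M.source S] (M.hEff l k t n) :=
  (M.measurable_phasor hphase t).mul (M.measurable_ch hch)

end Measurability

section SourceMoments

theorem hasComplexGaussianParts_ch (l : Fin L) (k : Fin K) (n : Fin N) :
    HasComplexGaussianParts (M.ch l k n) (lam l k) ℙ where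
  re := ⟨(M.meas_hRe l k n).aemeasurable, M.law_hRe l k n⟩
  im := ⟨(M.meas_hIm l k n).aemeasurable, M.law_hIm l k n⟩

theorem hasComplexGaussianParts_z (n : Fin N) (s : ℕ) :
    HasComplexGaussianParts (M.z n s) 1 ℙ where
  re := ⟨(M.meas_zRe n s).aemeasurable, M.law_zRe n s⟩
  im := ⟨(M.meas_zIm n s).aemeasurable, M.law_zIm n s⟩

theorem hasComplexGaussianParts_eta (n : Fin N) (s : ℕ) :
    HasComplexGaussianParts (M.eta n s) (σ2 * ξ) ℙ where
  re := ⟨(M.meas_etaRe n s).aemeasurable, M.law_etaRe n s⟩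
  im := ⟨(M.meas_etaIm n s).aemeasurable, M.law_etaIm n s⟩

theorem crossCorr_ch (hlam : ∀ l k, 0 ≤ lam l k) (n : Fin N) (p q : Fin L × Fin K) :
    crossCorr (M.ch p.1 p.2 n) (M.ch q.1 q.2 n) ℙ = if p = q then (lam p.1 p.2 : ℂ) else 0 := by
  have hch (p : Fin L × Fin K) := M.hasComplexGaussianParts_ch p.1 p.2 n
  split_ifs with hpq
  · rw [← hpq, (hch p).crossCorr_self (hlam _ _)]
  · refine (hch q).crossCorr_eq_zero_of_indepFun ?_ (hch p).memLp_two.1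
    exact M.indepFun_of_measurable_compl (S := {i | ∃ c, i = .channel p.1 p.2 n c})
      (M.measurable_ch (by simp)) (M.measurable_ch (by grind))

theorem crossCorr_z (n : Fin N) (s s' : ℕ) :
    crossCorr (M.z n s) (M.z n s') ℙ = if s = s' then 1 else 0 := by
  have hz (s : ℕ) := M.hasComplexGaussianParts_z n s
  split_ifs with hs
  · rw [← hs, (hz s).crossCorr_self zero_le_one, ofReal_one]
  · refine (hz s').crossCorr_eq_zero_of_indepFun ?_ (hz s).memLp_two.1
    exact M.indepFun_of_measurable_compl (S := {i | ∃ c, i = .distortion n s c})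
      (M.measurable_z (by simp)) (M.measurable_z (by grind))

theorem crossCorr_eta (hσξ : 0 ≤ σ2 * ξ) (n : Fin N) (s s' : ℕ) :
    crossCorr (M.eta n s) (M.eta n s') ℙ = if s = s' then ((σ2 * ξ : ℝ) : ℂ) else 0 := by
  have heta (s : ℕ) := M.hasComplexGaussianParts_eta n s
  split_ifs with hs
  · rw [← hs, (heta s).crossCorr_self hσξ]
  · refine (heta s').crossCorr_eq_zero_of_indepFun ?_ (heta s).memLp_two.1
    exact M.indepFun_of_measurable_compl (S := {i | ∃ c, i = .noise n s c})
      (M.measurable_eta (by simp)) (M.measurable_eta (by grind))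

end SourceMoments

section Phasor

theorem phase_add (n : Fin N) (s d : ℕ) (ω : Ω) :
    M.phase n (s + d) ω = M.phase n s ω + ∑ i : Fin d, M.dphi n (s + i + 1) ω := by
  simp only [phase]
  induction d with
  | zero => simp
  | succ d ih =>
    rw [← add_assoc, Finset.sum_Icc_succ_top (by lia), ih, Fin.sum_univ_castSucc, add_assoc]
    rfl

theorem phasor_mul_star (n : Fin N) (a b : ℕ) (ω : Ω) :
    M.phasor n a ω * star (M.phasor n b ω) =
      cexp (I * ((M.phase n a ω - M.phase n b ω : ℝ) : ℂ)) := by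
  rw [phasor, phasor, star_def, ← exp_conj, ← Complex.exp_add, map_mul, conj_I, conj_ofReal,
    ofReal_sub]
  ring_nf

theorem norm_phasor (n : Fin N) (s : ℕ) (ω : Ω) : ‖M.phasor n s ω‖ = 1 := by
  rw [phasor, mul_comm, norm_exp_ofReal_mul_I]

theorem aestronglyMeasurable_phasor (n : Fin N) (s : ℕ) :
    AEStronglyMeasurable (M.phasor n s) ℙ :=
  (measurable_of_sigmaGenerated M.measurable_source
    (M.measurable_phasor (fun _ => Set.mem_univ _) s)).aestronglyMeasurable

theorem crossCorr_phasor_add (hδ : 0 ≤ δ) (n : Fin N) (s d : ℕ) :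
    crossCorr (M.phasor n (s + d)) (M.phasor n s) ℙ = (Real.exp (-(δ / 2) * d) : ℂ) := by
  have hinj : Function.Injective fun i : Fin d => (.phase n (s + i + 1) : Source N L K) := by
    intro i i' h
    simpa [Fin.ext_iff] using h
  have hindep : iIndepFun (fun i : Fin d => M.dphi n (s + i + 1)) ℙ :=
    M.iIndepFun_source.precomp hinj
  have hlaw (i : Fin d) : HasLaw (M.dphi n (s + i + 1)) (gaussianReal 0 δ.toNNReal) :=
    ⟨(M.meas_dphi n _).aemeasurable, M.law_dphi n _⟩
  simp only [crossCorr, phasor_mul_star, phase_add, add_sub_cancel_left]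
  rw [integral_cexp_I_mul_sum_of_hasLaw_gaussianReal hindep hlaw, Real.coe_toNNReal _ hδ,
    Fintype.card_fin]

theorem crossCorr_phasor (hδ : 0 ≤ δ) (n : Fin N) (a b : ℕ) :
    crossCorr (M.phasor n a) (M.phasor n b) ℙ =
      (Real.exp (-(δ / 2) * |(a : ℝ) - b|) : ℂ) := by
  rcases le_total b a with hba | hab
  · obtain ⟨d, rfl⟩ := Nat.exists_eq_add_of_le hba
    rw [M.crossCorr_phasor_add hδ, Nat.cast_add, add_sub_cancel_left, Nat.abs_cast]
  · obtain ⟨d, rfl⟩ := Nat.exists_eq_add_of_le hab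
    rw [← star_crossCorr, M.crossCorr_phasor_add hδ, star_def, conj_ofReal, Nat.cast_add,
      sub_add_cancel_left, abs_neg, Nat.abs_cast]

theorem crossCorr_phasor_mul (hδ : 0 ≤ δ) (n : Fin N) (a b : ℕ) {f g : Ω → ℂ}
    (hf : Measurable[sigmaGenerated M.source (Source.phaseSources N L K)ᶜ] f)
    (hg : Measurable[sigmaGenerated M.source (Source.phaseSources N L K)ᶜ] g) :
    crossCorr (fun ω => M.phasor n a ω * f ω) (fun ω => M.phasor n b ω * g ω) ℙ =
      (Real.exp (-(δ / 2) * |(a : ℝ) - b|) : ℂ) * crossCorr f g ℙ := by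
  have hphasor (s : ℕ) :
      Measurable[sigmaGenerated M.source (Source.phaseSources N L K)] (M.phasor n s) :=
    M.measurable_phasor (by simp [Source.phaseSources]) s
  rw [crossCorr_mul_mul_of_indepFun
    (M.indepFun_of_measurable_compl ((hphasor a).prodMk (hphasor b)) (hf.prodMk hg))
    (M.aestronglyMeasurable_phasor n a) (M.aestronglyMeasurable_phasor n b)
    (measurable_of_sigmaGenerated M.measurable_source hf).aestronglyMeasurable
    (measurable_of_sigmaGenerated M.measurable_source hg).aestronglyMeasurable,
    M.crossCorr_phasor hδ]

end Phasor

section ReceivedSignal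

theorem memLp_pilotSum (n : Fin N) (b : Fin B) : MemLp (M.pilotSum n b) 2 ℙ :=
  memLp_finsetSum _ fun l _ => memLp_finsetSum _ fun m _ =>
    (M.hasComplexGaussianParts_ch l m n).memLp_two.mul_const _

theorem memLp_signal (n : Fin N) (b : Fin B) : MemLp (M.signal n b) 2 ℙ :=
  memLp_mul_of_norm_eq_one (M.aestronglyMeasurable_phasor n _) (M.norm_phasor n _)
    (M.memLp_pilotSum n b)

theorem memLp_hEff (l : Fin L) (k : Fin K) (t : ℕ) (n : Fin N) : MemLp (M.hEff l k t n) 2 ℙ :=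
  memLp_mul_of_norm_eq_one (M.aestronglyMeasurable_phasor n _) (M.norm_phasor n _)
    (M.hasComplexGaussianParts_ch l k n).memLp_two

theorem normSq_distortionScale (n : Fin N) (b : Fin B) (ω : Ω) :
    normSq (M.distortionScale n b ω) =
      κ ^ 2 * ∑ l, ∑ m, normSq (x l m b) * normSq (M.ch l m n ω) := by
  rw [distortionScale, normSq_mul, normSq_ofReal, normSq_ofReal, Real.mul_self_sqrt, pow_two]
  exact Finset.sum_nonneg fun l _ => Finset.sum_nonneg fun m _ =>
    mul_nonneg (normSq_nonneg _) (normSq_nonneg _)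

theorem memLp_distortionScale (n : Fin N) (b : Fin B) : MemLp (M.distortionScale n b) 2 ℙ := by
  refine (memLp_two_iff_integrable_sq_norm (measurable_of_sigmaGenerated M.measurable_source
    (M.measurable_distortionScale (fun _ _ _ => Set.mem_univ _) b)).aestronglyMeasurable).2 ?_
  simp only [← normSq_eq_norm_sq, normSq_distortionScale]
  refine .const_mul (integrable_finsetSum _ fun l _ => integrable_finsetSum _ fun m _ => ?_) _
  exact (integrable_normSq_of_memLp_two
    (M.hasComplexGaussianParts_ch l m n).memLp_two).const_mul _

theorem memLp_distortion (n : Fin N) (b : Fin B) : MemLp (M.distortion n b) 2 ℙ :=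
  memLp_two_mul_of_indepFun
    (M.indepFun_of_measurable_compl (S := (Source.distortionSources N L K)ᶜ)
      (M.measurable_distortionScale (by simp [Source.distortionSources]) b)
      (M.measurable_z (by simp [Source.distortionSources])))
    (M.memLp_distortionScale n b) (M.hasComplexGaussianParts_z n _).memLp_two

theorem memLp_y (n : Fin N) (b : Fin B) : MemLp (M.y n b) 2 ℙ :=
  ((M.memLp_signal n b).add (M.memLp_distortion n b)).add
    (M.hasComplexGaussianParts_eta n _).memLp_two

theorem pilotSum_eq_sum_prod (n : Fin N) (b : Fin B) :
    M.pilotSum n b = fun ω => ∑ p : Fin L × Fin K, x p.1 p.2 b * M.ch p.1 p.2 n ω := by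
  funext ω
  simp only [pilotSum, mul_comm, Fintype.sum_prod_type]

theorem crossCorr_ch_pilotSum (hlam : ∀ l k, 0 ≤ lam l k) (l : Fin L) (k : Fin K) (n : Fin N)
    (b : Fin B) : crossCorr (M.ch l k n) (M.pilotSum n b) ℙ = lam l k * star (x l k b) := by
  have hch (p : Fin L × Fin K) : MemLp (M.ch p.1 p.2 n) 2 ℙ :=
    (M.hasComplexGaussianParts_ch p.1 p.2 n).memLp_two
  rw [pilotSum_eq_sum_prod, crossCorr_sum_mul_right _ (hch (l, k)) hch]
  simp only [M.crossCorr_ch hlam n (l, k), ite_mul, zero_mul, Finset.sum_ite_eq,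
    Finset.mem_univ, if_true]

theorem crossCorr_pilotSum (hlam : ∀ l k, 0 ≤ lam l k) (n : Fin N) (b b' : Fin B) :
    crossCorr (M.pilotSum n b) (M.pilotSum n b') ℙ =
      ∑ l, ∑ m, (lam l m : ℂ) * (x l m b * star (x l m b')) := by
  have hch (p : Fin L × Fin K) : MemLp (M.ch p.1 p.2 n) 2 ℙ :=
    (M.hasComplexGaussianParts_ch p.1 p.2 n).memLp_two
  rw [pilotSum_eq_sum_prod M n b, crossCorr_sum_mul_left _ hch (M.memLp_pilotSum n b')]
  simp only [M.crossCorr_ch_pilotSum hlam, Fintype.sum_prod_type, mul_left_comm]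

theorem crossCorr_distortionScale_self (hlam : ∀ l k, 0 ≤ lam l k) (n : Fin N) (b : Fin B) :
    crossCorr (M.distortionScale n b) (M.distortionScale n b) ℙ =
      ((κ ^ 2 * ∑ l, ∑ m, normSq (x l m b) * lam l m : ℝ) : ℂ) := by
  have hch (l : Fin L) (m : Fin K) : ∫ ω, normSq (M.ch l m n ω) = lam l m := by
    have h := (M.hasComplexGaussianParts_ch l m n).crossCorr_self (hlam l m)
    rwa [crossCorr_self, ofReal_inj] at h
  have hint (l : Fin L) (m : Fin K) :
      Integrable fun ω => normSq (x l m b) * normSq (M.ch l m n ω) :=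
    (integrable_normSq_of_memLp_two (M.hasComplexGaussianParts_ch l m n).memLp_two).const_mul _
  rw [crossCorr_self, ofReal_inj]
  simp only [normSq_distortionScale, integral_const_mul]
  rw [integral_finsetSum _ fun l _ => integrable_finsetSum _ fun m _ => hint l m]
  simp only [integral_finsetSum _ fun m _ => hint _ m, integral_const_mul, hch]

theorem crossCorr_signal (hlam : ∀ l k, 0 ≤ lam l k) (hδ : 0 ≤ δ) (n : Fin N) (b b' : Fin B) :
    crossCorr (M.signal n b) (M.signal n b') ℙ =
      (Real.exp (-(δ / 2) * |((b : ℕ) : ℝ) - ((b' : ℕ) : ℝ)|) : ℂ) *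
        ∑ l, ∑ m, (lam l m : ℂ) * (x l m b * star (x l m b')) := by
  have hpilot (b : Fin B) := M.measurable_pilotSum (n := n)
    (S := (Source.phaseSources N L K)ᶜ) (by simp [Source.phaseSources]) b
  refine (M.crossCorr_phasor_mul hδ n _ _ (hpilot b) (hpilot b')).trans ?_
  rw [M.crossCorr_pilotSum hlam, Nat.cast_succ, Nat.cast_succ, add_sub_add_right_eq_sub]

theorem crossCorr_hEff_signal (hlam : ∀ l k, 0 ≤ lam l k) (hδ : 0 ≤ δ) {t : ℕ} (ht : B ≤ t)
    (j : Fin L) (k : Fin K) (n : Fin N) (b : Fin B) :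
    crossCorr (M.hEff j k t n) (M.signal n b) ℙ =
      (Real.exp (-(δ / 2) * ((t : ℝ) - ((b : ℕ) + 1))) : ℂ) * (lam j k * star (x j k b)) := by
  refine (M.crossCorr_phasor_mul hδ n _ _ (M.measurable_ch (by simp [Source.phaseSources]))
    (M.measurable_pilotSum (by simp [Source.phaseSources]) b)).trans ?_
  have hbt : (((b : ℕ) + 1 : ℕ) : ℝ) ≤ t := by exact_mod_cast b.2.trans_le ht
  rw [M.crossCorr_ch_pilotSum hlam, abs_of_nonneg (sub_nonneg.2 hbt), Nat.cast_succ]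

theorem crossCorr_distortion (hlam : ∀ l k, 0 ≤ lam l k) (n : Fin N) (b b' : Fin B) :
    crossCorr (M.distortion n b) (M.distortion n b') ℙ =
      if b = b' then ((κ ^ 2 * ∑ l, ∑ m, normSq (x l m b) * lam l m : ℝ) : ℂ) else 0 := by
  have hscale (b : Fin B) := M.measurable_distortionScale (n := n)
    (S := (Source.distortionSources N L K)ᶜ) (by simp [Source.distortionSources]) b
  have hz (s : ℕ) := M.measurable_z (n := n) (s := s)
    (S := (Source.distortionSources N L K)ᶜᶜ) (by simp [Source.distortionSources])
  refine (crossCorr_mul_mul_of_indepFun (M.indepFun_of_measurable_compl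
    ((hscale b).prodMk (hscale b')) ((hz _).prodMk (hz _))) (M.memLp_distortionScale n b).1
    (M.memLp_distortionScale n b').1 (M.hasComplexGaussianParts_z n _).memLp_two.1
    (M.hasComplexGaussianParts_z n _).memLp_two.1).trans ?_
  rw [crossCorr_z]
  simp only [Nat.add_right_cancel_iff, Fin.val_inj]
  split_ifs with hb
  · rw [← hb, M.crossCorr_distortionScale_self hlam, mul_one]
  · rw [mul_zero]

theorem crossCorr_distortion_eq_zero {f : Ω → ℂ}
    (hf : Measurable[sigmaGenerated M.source (Source.distortionSources N L K)ᶜ] f) (n : Fin N)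
    (b : Fin B) : crossCorr f (M.distortion n b) ℙ = 0 := by
  have hscale := M.measurable_distortionScale (n := n)
    (S := (Source.distortionSources N L K)ᶜ) (by simp [Source.distortionSources]) b
  have hz := M.hasComplexGaussianParts_z n (b + 1)
  refine (crossCorr_mul_right_of_indepFun (M.indepFun_of_measurable_compl (hf.prodMk hscale)
    (M.measurable_z (by simp [Source.distortionSources])))
    (measurable_of_sigmaGenerated M.measurable_source hf).aestronglyMeasurable
    (M.memLp_distortionScale n b).1 hz.memLp_two.1).trans ?_
  rw [hz.integral_eq_zero, star_zero, mul_zero]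

theorem crossCorr_eta_eq_zero {f : Ω → ℂ}
    (hf : Measurable[sigmaGenerated M.source (Source.noiseSources N L K)ᶜ] f) (n : Fin N)
    (s : ℕ) : crossCorr f (M.eta n s) ℙ = 0 :=
  (M.hasComplexGaussianParts_eta n s).crossCorr_eq_zero_of_indepFun
    (M.indepFun_of_measurable_compl hf (M.measurable_eta (by simp [Source.noiseSources])))
    (measurable_of_sigmaGenerated M.measurable_source hf).aestronglyMeasurable

theorem crossCorr_y (n : Fin N) (b b' : Fin B) :
    crossCorr (M.y n b) (M.y n b') ℙ = crossCorr (M.signal n b) (M.signal n b') ℙ +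
      crossCorr (M.distortion n b) (M.distortion n b') ℙ +
        crossCorr (M.eta n (b + 1)) (M.eta n (b' + 1)) ℙ := by
  have hs (b : Fin B) := M.memLp_signal n b
  have hd (b : Fin B) := M.memLp_distortion n b
  have hsum (b : Fin B) : MemLp (fun ω => M.signal n b ω + M.distortion n b ω) 2 ℙ :=
    (hs b).add (hd b)
  have heta (b : Fin B) := (M.hasComplexGaussianParts_eta n (b + 1)).memLp_two
  have hsd (b b' : Fin B) : crossCorr (M.signal n b) (M.distortion n b') ℙ = 0 :=
    M.crossCorr_distortion_eq_zero (M.measurable_signal (by simp [Source.distortionSources])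
      (by simp [Source.distortionSources]) b) n b'
  have hsdeta (b b' : Fin B) :
      crossCorr (fun ω => M.signal n b ω + M.distortion n b ω) (M.eta n (b' + 1)) ℙ = 0 :=
    M.crossCorr_eta_eq_zero
      ((M.measurable_signal (by simp [Source.noiseSources]) (by simp [Source.noiseSources]) b).add
        (M.measurable_distortion (by simp [Source.noiseSources])
          (by simp [Source.noiseSources]))) n _
  rw [y_eq, y_eq, crossCorr_add_add_of_crossCorr_eq_zero (hsum b) (heta b) (hsum b')
    (heta b') (hsdeta b b') (hsdeta b' b),
    crossCorr_add_add_of_crossCorr_eq_zero (hs b) (hd b) (hs b') (hd b') (hsd b b') (hsd b' b)]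

theorem corrMatrix_y (hlam : ∀ l k, 0 ≤ lam l k) (hσξ : 0 ≤ σ2 * ξ) (hδ : 0 ≤ δ) (n : Fin N) :
    corrMatrix (M.y n) ℙ = PsiMat lam σ2 ξ κ δ x := by
  ext b b'
  rw [corrMatrix, of_apply, M.crossCorr_y, M.crossCorr_signal hlam hδ, M.crossCorr_distortion hlam,
    M.crossCorr_eta hσξ]
  simp only [PsiMat, Matrix.add_apply, Matrix.sum_apply, Matrix.smul_apply, smul_eq_mul, Xmat,
    Matrix.of_apply, Matrix.one_apply, Nat.add_right_cancel_iff, Fin.val_inj]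
  split_ifs with hb
  · rw [← hb]
    simp only [sub_self, abs_zero, mul_zero, Real.exp_zero, ofReal_one, one_mul, mul_one, star_def,
      mul_conj, ofReal_mul, ofReal_sum, Finset.mul_sum, ← Finset.sum_add_distrib]
    congr! 3
    push_cast
    ring
  · simp only [Finset.mul_sum, add_zero, mul_zero]
    congr! 2
    ring

theorem crossCorrVec_hEff_y (hlam : ∀ l k, 0 ≤ lam l k) (hδ : 0 ≤ δ) {t : ℕ} (ht : B ≤ t)
    (j : Fin L) (k : Fin K) (n : Fin N) :
    crossCorrVec (M.hEff j k t n) (M.y n) ℙ = (lam j k : ℂ) • (star (x j k) ᵥ* Dmat δ t B) := by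
  ext b
  have hdist : crossCorr (M.hEff j k t n) (M.distortion n b) ℙ = 0 :=
    M.crossCorr_distortion_eq_zero (M.measurable_hEff (by simp [Source.distortionSources])
      (by simp [Source.distortionSources]) t) n b
  have heta : crossCorr (M.hEff j k t n) (M.eta n (b + 1)) ℙ = 0 :=
    M.crossCorr_eta_eq_zero (M.measurable_hEff (by simp [Source.noiseSources])
      (by simp [Source.noiseSources]) t) n _
  have hsd : MemLp (fun ω => M.signal n b ω + M.distortion n b ω) 2 ℙ :=
    (M.memLp_signal n b).add (M.memLp_distortion n b)
  rw [crossCorrVec, y_eq, crossCorr_add_right (M.memLp_hEff j k t n) hsd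
      (M.hasComplexGaussianParts_eta n _).memLp_two,
    crossCorr_add_right (M.memLp_hEff j k t n) (M.memLp_signal n b) (M.memLp_distortion n b),
    M.crossCorr_hEff_signal hlam hδ ht, hdist, heta, Pi.smul_apply, Dmat, vecMul_diagonal,
    Pi.star_apply, smul_eq_mul]
  ring

end ReceivedSignal

section Estimate

theorem hHat_eq_lmmse (hlam : ∀ l k, 0 ≤ lam l k) (hσξ : 0 ≤ σ2 * ξ) (hδ : 0 ≤ δ) {t : ℕ}
    (ht : B ≤ t) (j : Fin L) (k : Fin K) (n : Fin N) :
    M.hHat j k t n = lmmse (M.hEff j k t n) (M.y n) ℙ := by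
  funext ω
  simp only [hHat, lmmse, lmmseWeights, M.corrMatrix_y hlam hσξ hδ,
    M.crossCorrVec_hEff_y hlam hδ ht, smul_vecMul, vecMul_vecMul, Pi.smul_apply, smul_eq_mul,
    Finset.mul_sum, mul_assoc]

theorem memLp_hHat (j : Fin L) (k : Fin K) (t : ℕ) (n : Fin N) : MemLp (M.hHat j k t n) 2 ℙ :=
  (memLp_finsetSum _ fun b _ => (M.memLp_y n b).const_mul _).const_mul _

theorem crossCorrVec_dotProduct_mulVec (hlam : ∀ l k, 0 ≤ lam l k) (hσξ : 0 ≤ σ2 * ξ)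
    (hδ : 0 ≤ δ) {t : ℕ} (ht : B ≤ t) (j : Fin L) (k : Fin K) (n : Fin N) :
    crossCorrVec (M.hEff j k t n) (M.y n) ℙ ⬝ᵥ
        (corrMatrix (M.y n) ℙ)⁻¹ *ᵥ star (crossCorrVec (M.hEff j k t n) (M.y n) ℙ) =
      (lam j k : ℂ) ^ 2 * (star (x j k) ⬝ᵥ (Dmat δ t B * (PsiMat lam σ2 ξ κ δ x)⁻¹
        * (Dmat δ t B)ᴴ).mulVec (x j k)) := by
  rw [M.corrMatrix_y hlam hσξ hδ, M.crossCorrVec_hEff_y hlam hδ ht, star_smul, star_vecMul,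
    star_star, star_def, conj_ofReal, mulVec_smul, smul_dotProduct, dotProduct_smul,
    ← dotProduct_mulVec, mulVec_mulVec, mulVec_mulVec, smul_eq_mul, smul_eq_mul,
    ← mul_assoc (lam j k : ℂ), ← pow_two]

theorem crossCorr_hEff_hHat (hlam : ∀ l k, 0 ≤ lam l k) (hσξ : 0 ≤ σ2 * ξ) (hδ : 0 ≤ δ) {t : ℕ}
    (ht : B ≤ t) (j : Fin L) (k : Fin K) (n : Fin N) :
    crossCorr (M.hEff j k t n) (M.hHat j k t n) ℙ =
      (lam j k : ℂ) ^ 2 * (star (x j k) ⬝ᵥ (Dmat δ t B * (PsiMat lam σ2 ξ κ δ x)⁻¹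
        * (Dmat δ t B)ᴴ).mulVec (x j k)) := by
  rw [M.hHat_eq_lmmse hlam hσξ hδ ht, crossCorr_lmmse (M.memLp_hEff j k t n) (M.memLp_y n),
    M.crossCorrVec_dotProduct_mulVec hlam hσξ hδ ht]

theorem crossCorr_hHat_self (hlam : ∀ l k, 0 ≤ lam l k) (hσξ : 0 ≤ σ2 * ξ) (hδ : 0 ≤ δ) {t : ℕ}
    (ht : B ≤ t) (j : Fin L) (k : Fin K) (n : Fin N) :
    crossCorr (M.hHat j k t n) (M.hHat j k t n) ℙ =
      (lam j k : ℂ) ^ 2 * (star (x j k) ⬝ᵥ (Dmat δ t B * (PsiMat lam σ2 ξ κ δ x)⁻¹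
        * (Dmat δ t B)ᴴ).mulVec (x j k)) := by
  rw [M.hHat_eq_lmmse hlam hσξ hδ ht, crossCorr_lmmse_self (M.memLp_y n),
    M.crossCorrVec_dotProduct_mulVec hlam hσξ hδ ht]

end Estimate

end MIMOModel

/-- **First moment of the MRC filter output (Theorem 2, eq. (10)).** With the MRC filter
`v_{jk}(t) = ĥ_{jjk}(t)`,
`E[v_{jk}(t)ᴴ h_{jjk}(t)] = E[‖v_{jk}(t)‖²] = N λ_{jjk}² x̃_{jk}ᴴ D_{δ(t)} Ψ_j⁻¹ D_{δ(t)}ᴴ x̃_{jk}`;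
in particular this expectation is real and nonnegative. -/
theorem mrc_first_moment
    {Ω : Type*} [MeasureSpace Ω] [IsProbabilityMeasure (ℙ : Measure Ω)]
    {N B L K : ℕ} {lam : Fin L → Fin K → ℝ} {σ2 ξ κ δ : ℝ}
    {x : Fin L → Fin K → Fin B → ℂ}
    (M : MIMOModel Ω N B L K lam σ2 ξ κ δ x)
    (hlam : ∀ l k, 0 < lam l k) (hσ2 : 0 < σ2) (hξ : 1 ≤ ξ) (hκ : 0 ≤ κ) (hδ : 0 ≤ δ)
    (t : ℕ) (ht : B < t) (j : Fin L) :
    ∀ k : Fin K,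
      ((∫ ω, ∑ n, star (M.hHat j k t n ω) * M.hEff j k t n ω)
          = ((∫ ω, ∑ n, Complex.normSq (M.hHat j k t n ω) : ℝ) : ℂ)) ∧
      ((∫ ω, ∑ n, star (M.hHat j k t n ω) * M.hEff j k t n ω)
          = (N : ℂ) * ((lam j k : ℝ) : ℂ) ^ 2
            * (star (x j k) ⬝ᵥ (Dmat δ t B * (PsiMat lam σ2 ξ κ δ x)⁻¹
                * (Dmat δ t B)ᴴ).mulVec (x j k))) ∧
      (∫ ω, ∑ n, star (M.hHat j k t n ω) * M.hEff j k t n ω).im = 0 ∧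
      0 ≤ (∫ ω, ∑ n, star (M.hHat j k t n ω) * M.hEff j k t n ω).re := by
  intro k
  have hlam₀ (l : Fin L) (m : Fin K) : 0 ≤ lam l m := (hlam l m).le
  have hσξ : 0 ≤ σ2 * ξ := by positivity
  have hcross : ∫ ω, ∑ n, star (M.hHat j k t n ω) * M.hEff j k t n ω =
      (N : ℂ) * (lam j k : ℂ) ^ 2 * (star (x j k) ⬝ᵥ (Dmat δ t B * (PsiMat lam σ2 ξ κ δ x)⁻¹
        * (Dmat δ t B)ᴴ).mulVec (x j k)) := by
    rw [integral_sum_star_mul (M.memLp_hHat j k t) (M.memLp_hEff j k t)]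
    simp only [M.crossCorr_hEff_hHat hlam₀ hσξ hδ ht.le, Finset.sum_const, Finset.card_univ,
      Fintype.card_fin, nsmul_eq_mul, mul_assoc]
  have hnorm : ∫ ω, ∑ n, star (M.hHat j k t n ω) * M.hEff j k t n ω =
      ((∫ ω, ∑ n, normSq (M.hHat j k t n ω) : ℝ) : ℂ) := by
    rw [integral_sum_star_mul (M.memLp_hHat j k t) (M.memLp_hEff j k t),
      ofReal_integral_sum_normSq (M.memLp_hHat j k t)]
    simp only [M.crossCorr_hEff_hHat hlam₀ hσξ hδ ht.le, M.crossCorr_hHat_self hlam₀ hσξ hδ ht.le]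
  refine ⟨hnorm, hcross, ?_, ?_⟩
  · rw [hnorm, ofReal_im]
  · rw [hnorm, ofReal_re]
    exact integral_nonneg fun ω => Finset.sum_nonneg fun n _ => normSq_nonneg _
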